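/- arXiv:2102.11049 — 2 statements merged into one kernel-verified Lean document; each statement's English description precedes it below -/
import Mathlib

section
/- Let S_1,…,S_N (N ≥ 2) be contracting similarities of ℝ^D with ratios λ_1,…,λ_N ∈ (0,1) satisfying the open set condition, let Λ be the attractor and let s be the similarity dimension. Then the box dimension of Λ exists and equals s. -/
lemma sim_surj {D : ℕ} (f : EuclideanSpace ℝ (Fin D) → EuclideanSpace ℝ (Fin D)) (l : ℝ)
    (hl : 0 < l) (hf : ∀ x y, dist (f x) (f y) = l * dist x y) : Function.Surjective f := by
  have hiso : Isometry (fun x => l⁻¹ • f x) := by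
    refine Isometry.of_dist_eq fun x y => ?_
    rw [dist_smul₀, hf, Real.norm_eq_abs, abs_of_pos (inv_pos.2 hl)]
    field_simp
  let g := hiso.affineIsometryOfStrictConvexSpace
  have hg : Function.Surjective g.linearIsometry := by
    have := LinearMap.injective_iff_surjective.1
      (show Function.Injective g.linearIsometry.toLinearMap from g.linearIsometry.injective)
    exact this
  have hg2 : Function.Surjective g := by
    intro y
    obtain ⟨v, hv⟩ := hg (y - g 0)
    refine ⟨v, ?_⟩
    have := g.map_vadd 0 v
    simp only [vadd_eq_add, add_zero] at this
    rw [this, hv]; simp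
  intro y
  obtain ⟨x, hx⟩ := hg2 (l⁻¹ • y)
  refine ⟨x, ?_⟩
  have : l⁻¹ • f x = l⁻¹ • y := hx
  exact smul_right_injective _ (inv_pos.2 hl).ne' this

lemma rec_sum {N : ℕ} (lam : Fin N → ℝ) (hlam : ∀ i, lam i ∈ Set.Ioo (0:ℝ) 1)
    (s : ℝ) (hs : ∑ i, lam i ^ s = 1) (δ : ℝ) (hδ : 0 < δ) :
    ∑ i, (δ / lam i) ^ (-s) = δ ^ (-s) := by
  have : ∀ i, (δ / lam i) ^ (-s) = lam i ^ s * δ ^ (-s) := by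
    intro i
    rw [Real.div_rpow hδ.le (hlam i).1.le, Real.rpow_neg (hlam i).1.le]
    field_simp
  simp only [this]
  rw [← Finset.sum_mul, hs, one_mul]

lemma exists_bounds {N : ℕ} (hN : 2 ≤ N) (lam : Fin N → ℝ) (hlam : ∀ i, lam i ∈ Set.Ioo (0:ℝ) 1) :
    ∃ a b : ℝ, 0 < a ∧ a < 1 ∧ 0 < b ∧ b < 1 ∧ ∀ i, a ≤ lam i ∧ lam i ≤ b := by
  haveI : Nonempty (Fin N) := ⟨⟨0, by omega⟩⟩
  obtain ⟨i, hi⟩ := Finite.exists_min lam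
  obtain ⟨j, hj⟩ := Finite.exists_max lam
  exact ⟨lam i, lam j, (hlam i).1, (hlam i).2, (hlam j).1, (hlam j).2, fun k => ⟨hi k, hj k⟩⟩

lemma scale_ind (P : ℝ → Prop) {N : ℕ} (lam : Fin N → ℝ) (hlam : ∀ i, lam i ∈ Set.Ioo (0:ℝ) 1)
    (a b d : ℝ) (ha : 0 < a) (hb : 0 < b) (hb1 : b < 1) (hd : 0 < d)
    (hab : ∀ i, a ≤ lam i ∧ lam i ≤ b)
    (base : ∀ δ, d ≤ δ → δ ≤ d / a → P δ)
    (step : ∀ δ, 0 < δ → (∀ i, P (δ / lam i)) → P δ) :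
    ∀ δ, 0 < δ → δ ≤ d / a → P δ := by
  have key : ∀ n : ℕ, ∀ δ, b ^ n * d ≤ δ → δ ≤ d / a → P δ := by
    intro n
    induction n with
    | zero => intro δ h1 h2; exact base δ (by simpa using h1) h2
    | succ n ih =>
      intro δ h1 h2
      by_cases h : d ≤ δ
      · exact base δ h h2
      push Not at h
      have hpos : 0 < δ := lt_of_lt_of_le (by positivity) h1
      refine step δ hpos fun i => ih _ ?_ ?_
      · rw [le_div_iff₀ (hlam i).1]
        calc b ^ n * d * lam i ≤ b ^ n * d * b := by gcongr; exact (hab i).2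
          _ ≤ δ := by rw [pow_succ] at h1; linarith
      · exact div_le_div₀ hd.le h.le ha (hab i).1
  intro δ h0 h1
  obtain ⟨n, hn⟩ := exists_pow_lt_of_lt_one (div_pos h0 hd) hb1
  exact key n δ (by rw [lt_div_iff₀ hd] at hn; exact hn.le) h1

lemma upper_cover {E : Type*} [MetricSpace E] {N : ℕ} (hN : 2 ≤ N)
    (S : Fin N → E → E)
    (lam : Fin N → ℝ) (hlam : ∀ i, lam i ∈ Set.Ioo (0:ℝ) 1)
    (hS : ∀ i x y, dist (S i x) (S i y) = lam i * dist x y)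
    (Λ : Set E) (hΛc : IsCompact Λ)
    (hΛ : Λ = ⋃ i, S i '' Λ)
    (s : ℝ) (hs0 : 0 ≤ s) (hs : ∑ i, lam i ^ s = 1) :
    ∃ C : ℝ, 0 < C ∧ ∀ δ : ℝ, 0 < δ → δ ≤ 1 → ∃ (ι : Type) (_ : Fintype ι) (U : ι → Set E),
      (∀ k, EMetric.diam (U k) ≤ ENNReal.ofReal δ) ∧ Λ ⊆ ⋃ k, U k ∧
      (Fintype.card ι : ℝ) ≤ C * δ ^ (-s) := by
  obtain ⟨a, b, ha, ha1, hb, hb1, hab⟩ := exists_bounds hN lam hlam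
  set d : ℝ := max 1 (Metric.diam Λ) with hd
  have hd1 : 1 ≤ d := le_max_left _ _
  have hd0 : 0 < d := by linarith
  refine ⟨(d / a) ^ s, by positivity, ?_⟩
  intro δ h0 h1
  refine scale_ind (fun δ => ∃ (ι : Type) (_ : Fintype ι) (U : ι → Set E),
      (∀ k, EMetric.diam (U k) ≤ ENNReal.ofReal δ) ∧ Λ ⊆ ⋃ k, U k ∧
      (Fintype.card ι : ℝ) ≤ (d / a) ^ s * δ ^ (-s)) lam hlam a b d ha hb hb1 hd0 hab ?_ ?_ δ h0 ?_
  · intro δ h1 h2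
    have h0 : 0 < δ := by linarith
    refine ⟨Unit, inferInstance, fun _ => Λ, fun _ => ?_, by intro x hx; simpa using hx, ?_⟩
    · refine EMetric.diam_le fun x hx y hy => ?_
      rw [edist_dist]
      apply ENNReal.ofReal_le_ofReal
      exact (Metric.dist_le_diam_of_mem hΛc.isBounded hx hy).trans ((le_max_right _ _).trans h1)
    · rw [Real.rpow_neg h0.le, ← div_eq_mul_inv, ← Real.div_rpow (by positivity) h0.le]
      simp only [Fintype.card_unit, Nat.cast_one]
      exact Real.one_le_rpow ((one_le_div h0).2 h2) hs0
  · intro δ h0 ih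
    choose ι hι U hU hcov hcard using ih
    refine ⟨Σ i, ι i, inferInstance, fun p => S p.1 '' U p.1 p.2, ?_, ?_, ?_⟩
    · rintro ⟨i, k⟩
      refine EMetric.diam_le ?_
      rintro _ ⟨x, hx, rfl⟩ _ ⟨y, hy, rfl⟩
      have h3 : edist x y ≤ ENNReal.ofReal (δ / lam i) :=
        (EMetric.edist_le_diam_of_mem hx hy).trans (hU i k)
      rw [edist_dist] at h3 ⊢
      have hl := (hlam i).1
      rw [ENNReal.ofReal_le_ofReal_iff (by positivity)] at h3
      apply ENNReal.ofReal_le_ofReal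
      rw [hS]
      rw [le_div_iff₀ hl] at h3
      linarith
    · intro x hx
      rw [hΛ] at hx
      obtain ⟨i, y, hy, rfl⟩ := Set.mem_iUnion.1 hx
      obtain ⟨k, hk⟩ := Set.mem_iUnion.1 (hcov i hy)
      exact Set.mem_iUnion.2 ⟨⟨i, k⟩, y, hk, rfl⟩
    · rw [Fintype.card_sigma]
      push_cast
      calc ∑ i, (Fintype.card (ι i) : ℝ) ≤ ∑ i, (d / a) ^ s * (δ / lam i) ^ (-s) :=
            Finset.sum_le_sum fun i _ => hcard i
        _ = _ := by rw [← Finset.mul_sum, rec_sum lam hlam s hs δ h0]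
  · rw [le_div_iff₀ ha]; nlinarith

lemma packing {D N : ℕ} (hN : 2 ≤ N)
    (S : Fin N → EuclideanSpace ℝ (Fin D) → EuclideanSpace ℝ (Fin D))
    (lam : Fin N → ℝ) (hlam : ∀ i, lam i ∈ Set.Ioo (0:ℝ) 1)
    (hS : ∀ i x y, dist (S i x) (S i y) = lam i * dist x y)
    (V : Set (EuclideanSpace ℝ (Fin D))) (hVne : V.Nonempty) (hVo : IsOpen V)
    (hV : ∀ i, S i '' V ⊆ V) (hVd : ∀ i j, i ≠ j → (S i '' V) ∩ (S j '' V) = ∅)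
    (Λ : Set (EuclideanSpace ℝ (Fin D)))
    (hΛne : Λ.Nonempty)
    (hΛ : Λ = ⋃ i, S i '' Λ)
    (s : ℝ) (hs0 : 0 ≤ s) (hs : ∑ i, lam i ^ s = 1) :
    ∃ r R : ℝ, 0 < r ∧ 0 ≤ R ∧ ∀ δ : ℝ, 0 < δ → δ ≤ 1 → ∃ (ι : Type) (_ : Fintype ι)
      (y z : ι → EuclideanSpace ℝ (Fin D)),
      (∀ k, Metric.ball (y k) (r * δ) ⊆ V) ∧ (∀ k, z k ∈ Λ) ∧ (∀ k, dist (y k) (z k) ≤ R * δ) ∧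
      (∀ j k, j ≠ k → Disjoint (Metric.ball (y j) (r * δ)) (Metric.ball (y k) (r * δ))) ∧
      δ ^ (-s) ≤ (Fintype.card ι : ℝ) := by
  obtain ⟨a, b, ha, ha1, hb, hb1, hab⟩ := exists_bounds hN lam hlam
  obtain ⟨x0, hx0⟩ := hVne
  obtain ⟨p, hp⟩ := hΛne
  obtain ⟨ρ, hρ, hρV⟩ := Metric.isOpen_iff.1 hVo x0 hx0
  refine ⟨ρ * a, dist x0 p, by positivity, dist_nonneg, ?_⟩
  intro δ h0 h1
  refine scale_ind (fun δ => ∃ (ι : Type) (_ : Fintype ι)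
      (y z : ι → EuclideanSpace ℝ (Fin D)),
      (∀ k, Metric.ball (y k) (ρ * a * δ) ⊆ V) ∧ (∀ k, z k ∈ Λ) ∧
      (∀ k, dist (y k) (z k) ≤ dist x0 p * δ) ∧
      (∀ j k, j ≠ k → Disjoint (Metric.ball (y j) (ρ * a * δ)) (Metric.ball (y k) (ρ * a * δ))) ∧
      δ ^ (-s) ≤ (Fintype.card ι : ℝ)) lam hlam a b 1 ha hb hb1 one_pos hab ?_ ?_ δ h0 ?_
  · intro δ h1 h2
    refine ⟨Unit, inferInstance, fun _ => x0, fun _ => p, fun _ => ?_, fun _ => hp, fun _ => ?_,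
      fun j k h => absurd rfl h, ?_⟩
    · refine (Metric.ball_subset_ball ?_).trans hρV
      rw [le_div_iff₀ ha] at h2
      nlinarith
    · exact le_mul_of_one_le_right dist_nonneg h1
    · simpa using Real.rpow_le_one_of_one_le_of_nonpos h1 (by linarith : -s ≤ 0)
  · intro δ h0 ih
    choose ι hι y z hyV hz hyz hdisj hcard using ih
    have hball : ∀ i (k : ι i), Metric.ball (S i (y i k)) (ρ * a * δ) ⊆
        S i '' Metric.ball (y i k) (ρ * a * (δ / lam i)) := by
      intro i k w hw
      have hl := (hlam i).1
      obtain ⟨v, rfl⟩ := sim_surj (S i) (lam i) hl (hS i) w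
      refine ⟨v, ?_, rfl⟩
      rw [Metric.mem_ball, hS] at hw
      rw [Metric.mem_ball, ← mul_div_assoc, lt_div_iff₀ hl]
      linarith
    have hinj : ∀ i, Function.Injective (S i) := by
      intro i u v huv
      have := hS i u v
      rw [huv, dist_self] at this
      have h3 := (mul_eq_zero.1 this.symm).resolve_left (hlam i).1.ne'
      exact dist_eq_zero.1 h3
    refine ⟨Σ i, ι i, inferInstance, fun p => S p.1 (y p.1 p.2), fun p => S p.1 (z p.1 p.2),
      ?_, ?_, ?_, ?_, ?_⟩
    · rintro ⟨i, k⟩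
      exact (hball i k).trans ((Set.image_mono (hyV i k)).trans (hV i))
    · rintro ⟨i, k⟩
      rw [hΛ]
      exact Set.mem_iUnion.2 ⟨i, z i k, hz i k, rfl⟩
    · rintro ⟨i, k⟩
      have hl := (hlam i).1
      have := hyz i k
      rw [← mul_div_assoc, le_div_iff₀ hl] at this
      simp only [hS]
      linarith
    · rintro ⟨i, k⟩ ⟨j, l⟩ hne
      refine Set.disjoint_of_subset (hball i k) (hball j l) ?_
      by_cases hij : i = j
      · subst hij
        have : k ≠ l := fun h => hne (by rw [h])
        exact (Set.disjoint_image_iff (hinj i)).2 (hdisj i k l this)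
      · exact Set.disjoint_of_subset (Set.image_mono (hyV i k)) (Set.image_mono (hyV j l))
          (Set.disjoint_iff_inter_eq_empty.2 (hVd i j hij))
    · rw [Fintype.card_sigma]
      push_cast
      rw [← rec_sum lam hlam s hs δ h0]
      exact Finset.sum_le_sum fun i _ => hcard i
  · rw [le_div_iff₀ ha]; nlinarith

lemma vol_count {D : ℕ} {ι : Type} (T : Finset ι) (y : ι → EuclideanSpace ℝ (Fin D))
    (c : EuclideanSpace ℝ (Fin D)) (r K δ : ℝ) (hr : 0 < r) (hK : 0 ≤ K) (hδ : 0 < δ)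
    (hc : ∀ k ∈ T, dist (y k) c ≤ K * δ)
    (hdisj : ∀ j k, j ≠ k → Disjoint (Metric.ball (y j) (r * δ)) (Metric.ball (y k) (r * δ))) :
    (T.card : ℝ) ≤ ((K + r) / r) ^ D := by
  open MeasureTheory in
  set μ : Measure (EuclideanSpace ℝ (Fin D)) := volume
  have h1 : μ (⋃ k ∈ T, Metric.ball (y k) (r * δ)) = ∑ k ∈ T, μ (Metric.ball (y k) (r * δ)) :=
    MeasureTheory.measure_biUnion_finset (fun j _ k _ h => hdisj j k h)
      (fun _ _ => measurableSet_ball)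
  have h2 : μ (⋃ k ∈ T, Metric.ball (y k) (r * δ)) ≤ μ (Metric.ball c ((K + r) * δ)) := by
    refine MeasureTheory.measure_mono (Set.iUnion₂_subset fun k hk => ?_)
    refine Metric.ball_subset_ball' ?_
    have := hc k hk
    linarith
  have hb : μ (Metric.ball 0 1) ≠ 0 := (Metric.measure_ball_pos μ _ one_pos).ne'
  have hb2 : μ (Metric.ball 0 1) ≠ ⊤ := MeasureTheory.measure_ball_lt_top.ne
  rw [h1] at h2
  have e : ∀ (x : EuclideanSpace ℝ (Fin D)) (t : ℝ), 0 < t → μ (Metric.ball x t) =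
      ENNReal.ofReal (t ^ D) * μ (Metric.ball 0 1) := by
    intro x t ht
    have := MeasureTheory.Measure.addHaar_ball_of_pos μ x ht
    simpa using this
  have hKr : 0 < (K + r) * δ := by positivity
  rw [e c _ hKr, Finset.sum_congr rfl (fun k _ => e (y k) (r * δ) (by positivity)),
    Finset.sum_const, nsmul_eq_mul, ← mul_assoc, ENNReal.mul_le_mul_iff_left hb hb2,
    ← ENNReal.ofReal_natCast, ← ENNReal.ofReal_mul (by positivity),
    ENNReal.ofReal_le_ofReal_iff (by positivity)] at h2
  rw [div_pow, le_div_iff₀ (by positivity)]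
  rw [mul_pow, mul_pow, ← mul_assoc] at h2
  exact le_of_mul_le_mul_right h2 (by positivity)


open Real Finset Filter

noncomputable section

/-- Smallest number of sets of diameter at most `δ` needed to cover `Λ`. -/
def coverNum {E : Type*} [EMetricSpace E] (Λ : Set E) (δ : ℝ) : ℕ :=
  sInf {m : ℕ | ∃ U : Fin m → Set E,
    (∀ k, EMetric.diam (U k) ≤ ENNReal.ofReal δ) ∧ Λ ⊆ ⋃ k, U k}

/-- The box dimension of a self-similar set satisfying the open set
condition exists and equals the similarity dimension. -/
theorem box_dimension_of_self_similar_set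
    (D N : ℕ) (hN : 2 ≤ N)
    (S : Fin N → EuclideanSpace ℝ (Fin D) → EuclideanSpace ℝ (Fin D))
    (lam : Fin N → ℝ) (hlam : ∀ i, lam i ∈ Set.Ioo (0:ℝ) 1)
    (hS : ∀ i x y, dist (S i x) (S i y) = lam i * dist x y)
    (hOSC : ∃ V : Set (EuclideanSpace ℝ (Fin D)), V.Nonempty ∧ IsOpen V ∧
      (∀ i, S i '' V ⊆ V) ∧ ∀ i j, i ≠ j → (S i '' V) ∩ (S j '' V) = ∅)
    (Λ : Set (EuclideanSpace ℝ (Fin D)))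
    (hΛne : Λ.Nonempty) (hΛc : IsCompact Λ)
    (hΛ : Λ = ⋃ i, S i '' Λ)
    (s : ℝ) (hs0 : 0 ≤ s) (hs : ∑ i, lam i ^ s = 1) :
    Filter.Tendsto (fun δ : ℝ => Real.log (coverNum Λ δ) / (-Real.log δ))
      (nhdsWithin 0 (Set.Ioi 0)) (nhds s) := by
  obtain ⟨V, hVne, hVo, hV, hVd⟩ := hOSC
  obtain ⟨C, hC, hup⟩ := upper_cover hN S lam hlam hS Λ hΛc hΛ s hs0 hs
  obtain ⟨r, R, hr, hR, hlow⟩ := packing hN S lam hlam hS V hVne hVo hV hVd Λ hΛne hΛ s hs0 hs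
  set M : ℝ := ((1 + 2 * R + r) / r) ^ D with hM
  have hMpos : 0 < M := by positivity
  have hb : ∀ δ : ℝ, 0 < δ → δ ≤ 1 →
      δ ^ (-s) ≤ M * coverNum Λ δ ∧ (coverNum Λ δ : ℝ) ≤ C * δ ^ (-s) := by
    intro δ h0 h1
    obtain ⟨ι, hι, U, hU, hcov, hcard⟩ := hup δ h0 h1
    have hmem : Fintype.card ι ∈ {m : ℕ | ∃ U : Fin m → Set (EuclideanSpace ℝ (Fin D)),
        (∀ k, EMetric.diam (U k) ≤ ENNReal.ofReal δ) ∧ Λ ⊆ ⋃ k, U k} := by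
      refine ⟨fun k => U ((Fintype.equivFin ι).symm k), fun k => hU _, fun x hx => ?_⟩
      obtain ⟨k, hk⟩ := Set.mem_iUnion.1 (hcov hx)
      exact Set.mem_iUnion.2 ⟨Fintype.equivFin ι k, by simpa using hk⟩
    refine ⟨?_, le_trans (by exact_mod_cast Nat.sInf_le hmem) hcard⟩
    obtain ⟨W, hW, hWc⟩ := Nat.sInf_mem ⟨_, hmem⟩
    change Fin (coverNum Λ δ) → _ at W
    obtain ⟨κ, hκ, y, z, -, hz, hyz, hdisj, hcardκ⟩ := hlow δ h0 h1
    have hch : ∀ j, ∃ k, z j ∈ W k := fun j => Set.mem_iUnion.1 (hWc (hz j))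
    choose f hf using hch
    refine hcardκ.trans ?_
    have hfib : ∀ k, (({j | f j = k} : Finset κ).card : ℝ) ≤ M := by
      intro k
      rcases Finset.eq_empty_or_nonempty ({j | f j = k} : Finset κ) with he | ⟨j0, hj0⟩
      · rw [he]; simpa using hMpos.le
      · refine vol_count _ y (y j0) r (1 + 2 * R) δ hr (by positivity) h0 ?_ hdisj
        intro j hj
        simp only [Finset.mem_filter, Finset.mem_univ, true_and] at hj hj0
        have hzz : dist (z j) (z j0) ≤ δ := by
          have h3 : edist (z j) (z j0) ≤ ENNReal.ofReal δ :=
            (EMetric.edist_le_diam_of_mem (hj ▸ hf j) (hj0 ▸ hf j0)).trans (hW k)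
          rw [edist_dist] at h3
          exact (ENNReal.ofReal_le_ofReal_iff h0.le).1 h3
        have h4 := dist_triangle4 (y j) (z j) (z j0) (y j0)
        have h5 := hyz j
        have h6 := hyz j0
        rw [dist_comm] at h6
        linarith
    have hsum : Fintype.card κ = ∑ k, ({j | f j = k} : Finset κ).card := by
      rw [← Finset.card_univ]
      exact Finset.card_eq_sum_card_fiberwise (fun _ _ => by simp)
    rw [hsum]
    push_cast
    calc _ ≤ ∑ k : Fin (coverNum Λ δ), M := Finset.sum_le_sum fun k _ => hfib k
      _ = M * coverNum Λ δ := by simp [mul_comm]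
  have hlog : Tendsto (fun δ : ℝ => -Real.log δ) (nhdsWithin 0 (Set.Ioi 0)) atTop :=
    tendsto_neg_atBot_atTop.comp Real.tendsto_log_nhdsGT_zero
  have hlim : ∀ c : ℝ, Tendsto (fun δ : ℝ => s + c / (-Real.log δ))
      (nhdsWithin 0 (Set.Ioi 0)) (nhds s) := by
    intro c
    simpa using (hlog.const_div_atTop c).const_add s
  have hev : ∀ᶠ δ : ℝ in nhdsWithin 0 (Set.Ioi 0), 0 < δ ∧ δ < 1 :=
    Ioo_mem_nhdsGT one_pos
  refine tendsto_of_tendsto_of_tendsto_of_le_of_le' (hlim (-Real.log M)) (hlim (Real.log C)) ?_ ?_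
  · filter_upwards [hev] with δ hδ
    have hl : 0 < -Real.log δ := by have := Real.log_neg hδ.1 hδ.2; linarith
    obtain ⟨h1, h2⟩ := hb δ hδ.1 hδ.2.le
    have hp : 0 < δ ^ (-s) := Real.rpow_pos_of_pos hδ.1 _
    have hn : (0:ℝ) < coverNum Λ δ := by
      by_contra h
      push Not at h
      nlinarith
    have := Real.log_le_log hp h1
    rw [Real.log_rpow hδ.1, Real.log_mul hMpos.ne' hn.ne'] at this
    rw [le_div_iff₀ hl, add_mul, div_mul_cancel₀ _ hl.ne']
    linarith
  · filter_upwards [hev] with δ hδ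
    have hl : 0 < -Real.log δ := by have := Real.log_neg hδ.1 hδ.2; linarith
    obtain ⟨h1, h2⟩ := hb δ hδ.1 hδ.2.le
    have hp : 0 < δ ^ (-s) := Real.rpow_pos_of_pos hδ.1 _
    have hn : (0:ℝ) < coverNum Λ δ := by
      by_contra h
      push Not at h
      nlinarith
    have := Real.log_le_log hn h2
    rw [Real.log_mul hC.ne' hp.ne', Real.log_rpow hδ.1] at this
    rw [div_le_iff₀ hl, add_mul, div_mul_cancel₀ _ hl.ne']
    linarith
end
end

section
/- There exists a constant c ≥ 1, depending only on N and λ_1,…,λ_N, such that for every δ ∈ (0,1) and every type p ∈ T_δ, c^{−1}·(1 + (−log δ)/χ(p))^{−N}·δ^{−H(p)/χ(p)} ≤ #T_δ(p) ≤ c·δ^{−H(p)/χ(p)}. -/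
open Real Finset Filter

noncomputable section

/-- Entropy `H(p) = -∑_i p_i log p_i`. -/
def entF {N : ℕ} (p : Fin N → ℝ) : ℝ := -∑ i, p i * Real.log (p i)

/-- Lyapunov exponent `χ(p) = -∑_i p_i log λ_i`. -/
def chiF {N : ℕ} (lam p : Fin N → ℝ) : ℝ := -∑ i, p i * Real.log (lam i)

/-- `k` is the `δ`-stopping of the sequence `i`: the unique positive integer with
`∏_{ℓ=1}^k λ_{i_ℓ} ≤ δ < ∏_{ℓ=1}^{k-1} λ_{i_ℓ}`. -/
def IsDeltaStopping {N : ℕ} (lam : Fin N → ℝ) (δ : ℝ) (i : ℕ → Fin N) (k : ℕ) : Prop :=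
  1 ≤ k ∧ (∏ ℓ ∈ Finset.range k, lam (i ℓ)) ≤ δ ∧
    δ < ∏ ℓ ∈ Finset.range (k - 1), lam (i ℓ)

/-- The symbolic Moran cover `B_δ`: finite words `w` such that every infinite
sequence extending `w` has `δ`-stopping equal to the length of `w`. -/
def moranCover {N : ℕ} (lam : Fin N → ℝ) (δ : ℝ) : Set (List (Fin N)) :=
  {w | ∀ i : ℕ → Fin N, (∀ ℓ (h : ℓ < w.length), i ℓ = w.get ⟨ℓ, h⟩) →
    IsDeltaStopping lam δ i w.length}

/-- The type of a finite word: the vector of relative frequencies of its letters. -/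
def typeOf {N : ℕ} (w : List (Fin N)) : Fin N → ℝ :=
  fun a => (w.count a : ℝ) / (w.length : ℝ)

open Nat in
lemma tc_fact (a b : ℕ) : a ! * a ^ b ≤ b ! * a ^ a := by
  rcases le_total a b with h | h
  · have h1 := Nat.factorial_mul_pow_sub_le_factorial h
    calc a ! * a ^ b = a ! * a ^ (b - a) * a ^ a := by
          rw [mul_assoc, ← pow_add, Nat.sub_add_cancel h]
      _ ≤ _ := Nat.mul_le_mul_right _ h1
  · have h1 := Nat.factorial_mul_descFactorial (n := a) (k := a - b) (by omega)
    rw [Nat.sub_sub_self h] at h1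
    have h2 := Nat.descFactorial_le_pow a (a - b)
    calc a ! * a ^ b = b ! * (a.descFactorial (a - b) * a ^ b) := by rw [← h1]; ring
      _ ≤ b ! * (a ^ (a - b) * a ^ b) := by gcongr
      _ = _ := by rw [← pow_add, Nat.sub_add_cancel h]

/-- words with prescribed letter counts -/
def tcW {N : ℕ} (n : Fin N → ℕ) : Set (List (Fin N)) := {w | ∀ a, w.count a = n a}

lemma tc_len {N : ℕ} (w : List (Fin N)) : ∑ a, w.count a = w.length := by
  have := Multiset.sum_count_eq_card (s := (Finset.univ : Finset (Fin N))) (m := (w : Multiset (Fin N))) (by simp)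
  simpa using this

lemma tcW_finite {N : ℕ} (n : Fin N → ℕ) : (tcW n).Finite := by
  refine (List.finite_length_eq (Fin N) (∑ a, n a)).subset ?_
  intro w hw
  have : ∑ a, w.count a = ∑ a, n a := Finset.sum_congr rfl (fun a _ => hw a)
  simpa [tc_len] using this

lemma tcW_succ {N : ℕ} (n : Fin N → ℕ) (hn : 0 < ∑ a, n a) :
    (tcW n).ncard = ∑ a, if 0 < n a then (tcW (Function.update n a (n a - 1))).ncard else 0 := by
  classical
  have key : tcW n = ⋃ a ∈ (Finset.univ.filter (fun a => 0 < n a)), (fun w => a :: w) '' tcW (Function.update n a (n a - 1)) := by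
    ext w
    simp only [Finset.mem_filter, Finset.mem_univ, true_and, Set.mem_iUnion, Set.mem_image, exists_prop]
    constructor
    · intro hw
      cases w with
      | nil =>
        exfalso
        have : ∑ a, n a = 0 := Finset.sum_eq_zero (fun a _ => by simpa using (hw a).symm)
        omega
      | cons b v =>
        have hb := hw b
        simp at hb
        refine ⟨b, by omega, v, ?_, rfl⟩
        intro c
        by_cases hc : c = b
        · subst hc; simp; omega
        · have := hw c
          simp [Ne.symm hc] at this
          simp [hc, this]
    · rintro ⟨b, hb, v, hv, rfl⟩ c
      have := hv c
      by_cases hc : c = b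
      · subst hc; simp at this; simp; omega
      · simp [hc] at this
        simp [Ne.symm hc, this]
  rw [← Finset.sum_filter, key]
  have hf : ∀ a, ((fun w => a :: w) '' tcW (Function.update n a (n a - 1))).Finite := fun a => (tcW_finite _).image _
  have h2 : (⋃ a ∈ (Finset.univ.filter (fun a => 0 < n a)), (fun w => a :: w) '' tcW (Function.update n a (n a - 1))) = (((Finset.univ.filter (fun a => 0 < n a)).biUnion (fun a => (hf a).toFinset) : Finset (List (Fin N))) : Set (List (Fin N))) := by
    ext w; simp
  rw [h2, Set.ncard_coe_finset, Finset.card_biUnion]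
  · refine Finset.sum_congr rfl fun a _ => ?_
    rw [← Set.ncard_eq_toFinset_card _ (hf a)]
    exact Set.ncard_image_of_injective _ (List.cons_injective)
  · intro a _ b _ hab
    rw [Function.onFun, Finset.disjoint_left]
    intro w h1 h2
    simp only [Set.Finite.mem_toFinset, Set.mem_image] at h1 h2
    obtain ⟨u, _, rfl⟩ := h1
    obtain ⟨v, _, h⟩ := h2
    simp at h
    exact hab h.1.symm

open Nat in
lemma tc_upd {N : ℕ} (n : Fin N → ℕ) (a : Fin N) (ha : 0 < n a) :
    (∑ b, Function.update n a (n a - 1) b) + 1 = ∑ b, n b ∧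
    ∏ b, (n b)! = n a * ∏ b, (Function.update n a (n a - 1) b)! := by
  classical
  constructor
  · rw [← Finset.add_sum_erase _ _ (Finset.mem_univ a), ← Finset.add_sum_erase _ n (Finset.mem_univ a)]
    have : ∑ x ∈ univ.erase a, Function.update n a (n a - 1) x = ∑ x ∈ univ.erase a, n x :=
      Finset.sum_congr rfl (fun x hx => by simp [Finset.ne_of_mem_erase hx])
    rw [this]; simp; omega
  · rw [← Finset.mul_prod_erase _ _ (Finset.mem_univ a), ← Finset.mul_prod_erase _ (fun b => (Function.update n a (n a - 1) b)!) (Finset.mem_univ a)]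
    have : ∏ x ∈ univ.erase a, (Function.update n a (n a - 1) x)! = ∏ x ∈ univ.erase a, (n x)! :=
      Finset.prod_congr rfl (fun x hx => by simp [Finset.ne_of_mem_erase hx])
    rw [this, ← mul_assoc]; simp [Nat.mul_factorial_pred ha.ne']

open Nat in
lemma tcW_card {N : ℕ} (k : ℕ) : ∀ (n : Fin N → ℕ), ∑ a, n a = k →
    (tcW n).ncard * ∏ a, (n a)! = k ! := by
  induction k with
  | zero =>
    intro n hn
    have h0 : ∀ a, n a = 0 := by simpa using hn
    have : tcW n = {[]} := by
      ext w
      simp only [tcW, Set.mem_ofPred_eq, h0, Set.mem_singleton_iff]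
      constructor
      · intro h
        have := tc_len w
        simp [h] at this
        exact List.length_eq_zero_iff.1 this.symm
      · rintro rfl; simp
    simp [this, h0]
  | succ k ih =>
    intro n hn
    rw [tcW_succ n (by omega), Finset.sum_mul]
    have : ∀ a ∈ (univ : Finset (Fin N)), (if 0 < n a then (tcW (Function.update n a (n a - 1))).ncard else 0) * ∏ b, (n b)! = n a * k ! := by
      intro a _
      split_ifs with h
      · obtain ⟨h1, h2⟩ := tc_upd n a h
        have := ih _ (by omega : ∑ b, Function.update n a (n a - 1) b = k)
        rw [h2, ← this]; ring
      · simp at h; simp [h]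
    rw [Finset.sum_congr rfl this, ← Finset.sum_mul, hn, Nat.factorial_succ]

lemma tcW_multi {N : ℕ} (n : Fin N → ℕ) : (tcW n).ncard = Nat.multinomial univ n := by
  have h1 := tcW_card _ n rfl
  have h2 := Nat.multinomial_spec univ n
  rw [← h2, mul_comm] at h1
  exact Nat.eq_of_mul_eq_mul_left (Finset.prod_pos fun i _ => Nat.factorial_pos _) h1

lemma tc_upper {N : ℕ} (n : Fin N → ℕ) :
    (tcW n).ncard * ∏ a, n a ^ n a ≤ (∑ a, n a) ^ (∑ a, n a) := by
  classical
  rw [tcW_multi, Finset.sum_pow_eq_sum_piAntidiag]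
  exact Finset.single_le_sum (f := fun k : Fin N → ℕ => Nat.multinomial univ k * ∏ i, n i ^ k i) (fun _ _ => Nat.zero_le _) (by simp)

lemma tc_cardle {N : ℕ} (hN : 1 ≤ N) (k : ℕ) :
    (Finset.piAntidiag (univ : Finset (Fin N)) k).card ≤ (k + 1) ^ (N - 1) := by
  classical
  obtain ⟨M, rfl⟩ : ∃ M, N = M + 1 := ⟨N - 1, by omega⟩
  have : (Fintype.piFinset (fun _ : Fin M => Finset.range (k + 1))).card = (k + 1) ^ M := by simp
  rw [Nat.add_sub_cancel, ← this]
  refine Finset.card_le_card_of_injOn (fun f => Fin.tail f) ?_ ?_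
  · intro f hf
    have hf : ∑ x, f x = k := by simpa using hf
    simp only [Finset.mem_coe, Fintype.mem_piFinset, Finset.mem_range, Fin.tail]
    intro i
    have := Finset.single_le_sum (f := f) (fun _ _ => Nat.zero_le _) (Finset.mem_univ i.succ)
    omega
  · intro f hf g hg h
    simp at hf hg
    rw [Fin.sum_univ_succ] at hf hg
    have h' : ∀ i : Fin M, f i.succ = g i.succ := fun i => congrFun h i
    simp only [h'] at hf
    funext i
    refine Fin.cases ?_ h' i
    omega

open Nat in
lemma tc_lower {N : ℕ} (hN : 1 ≤ N) (n : Fin N → ℕ) (k : ℕ) (hk : ∑ a, n a = k) :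
    k ^ k ≤ (k + 1) ^ (N - 1) * ((tcW n).ncard * ∏ a, n a ^ n a) := by
  classical
  have h1 : k ^ k = (∑ a, n a) ^ k := by rw [hk]
  rw [h1, Finset.sum_pow_eq_sum_piAntidiag]
  refine (Finset.sum_le_card_nsmul _ _ ((tcW n).ncard * ∏ a, n a ^ n a) ?_).trans ?_
  · intro f hf
    simp at hf
    rw [← tcW_multi, Nat.cast_id]
    have e1 := tcW_card k f hf
    have e2 := tcW_card k n hk
    have hp : 0 < (∏ a, (n a)!) * ∏ a, (f a)! :=
      Nat.mul_pos (Finset.prod_pos fun i _ => Nat.factorial_pos _) (Finset.prod_pos fun i _ => Nat.factorial_pos _)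
    refine Nat.le_of_mul_le_mul_left ?_ hp
    have e3 : ∏ a, ((n a)! * n a ^ f a) ≤ ∏ a, ((f a)! * n a ^ n a) :=
      Finset.prod_le_prod' fun a _ => tc_fact _ _
    rw [Finset.prod_mul_distrib, Finset.prod_mul_distrib] at e3
    calc _ = ((tcW f).ncard * ∏ a, (f a)!) * ((∏ a, (n a)!) * ∏ a, n a ^ f a) := by ring
      _ = ((tcW n).ncard * ∏ a, (n a)!) * ((∏ a, (n a)!) * ∏ a, n a ^ f a) := by rw [e1, e2]
      _ ≤ ((tcW n).ncard * ∏ a, (n a)!) * ((∏ a, (f a)!) * ∏ a, n a ^ n a) := by gcongr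
      _ = _ := by ring
  · rw [smul_eq_mul]
    exact Nat.mul_le_mul_right _ (tc_cardle hN k)

open Nat in
lemma tc_last {N : ℕ} (n : Fin N → ℕ) (a : Fin N) (ha : 0 < n a) :
    (tcW n).ncard ≤ (∑ b, n b) * (tcW (Function.update n a (n a - 1))).ncard := by
  obtain ⟨h1, h2⟩ := tc_upd n a ha
  have e1 := tcW_card _ n rfl
  have e2 := tcW_card _ (Function.update n a (n a - 1)) rfl
  refine Nat.le_of_mul_le_mul_right ?_ (Finset.prod_pos fun i _ => Nat.factorial_pos _ : 0 < ∏ b, (n b)!)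
  rw [e1, ← h1, Nat.factorial_succ, ← e2, h2]
  have : 1 ≤ n a := ha
  calc _ = (∑ b, Function.update n a (n a - 1) b + 1) * ((tcW (Function.update n a (n a - 1))).ncard *
      (1 * ∏ b, (Function.update n a (n a - 1) b)!)) := by ring
    _ ≤ (∑ b, Function.update n a (n a - 1) b + 1) * ((tcW (Function.update n a (n a - 1))).ncard *
      (n a * ∏ b, (Function.update n a (n a - 1) b)!)) := by gcongr
    _ = _ := by ring

lemma tc_prod {N : ℕ} (lam : Fin N → ℝ) (hlam : ∀ i, lam i ∈ Set.Ioo (0:ℝ) 1) (w : List (Fin N)) :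
    (w.map lam).prod = Real.exp (∑ a, (w.count a : ℝ) * Real.log (lam a)) := by
  induction w with
  | nil => simp
  | cons b v ih =>
    have : ∑ a, ((b :: v).count a : ℝ) * Real.log (lam a) =
        Real.log (lam b) + ∑ a, (v.count a : ℝ) * Real.log (lam a) := by
      simp only [List.count_cons, Nat.cast_add, add_mul, Finset.sum_add_distrib]
      rw [add_comm]
      simp
    rw [this, Real.exp_add, Real.exp_log (hlam b).1, List.map_cons, List.prod_cons, ih]

lemma tc_range {N : ℕ} (lam : Fin N → ℝ) (w : List (Fin N)) (i : ℕ → Fin N)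
    (h : ∀ ℓ (h : ℓ < w.length), i ℓ = w.get ⟨ℓ, h⟩) :
    ∏ ℓ ∈ Finset.range w.length, lam (i ℓ) = (w.map lam).prod := by
  rw [Finset.prod_range]
  have : ∀ ℓ : Fin w.length, lam (i ℓ) = lam (w.get ℓ) := fun ℓ => by rw [h ℓ ℓ.2]
  simp only [this]
  rw [← List.prod_ofFn]
  congr 1
  apply List.ext_get <;> simp

lemma tc_mem {N : ℕ} (lam : Fin N → ℝ) (hlam : ∀ i, lam i ∈ Set.Ioo (0:ℝ) 1) (δ : ℝ)
    (v : List (Fin N)) (a : Fin N) :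
    v ++ [a] ∈ moranCover lam δ ↔ ((v ++ [a]).map lam).prod ≤ δ ∧
      δ * lam a < ((v ++ [a]).map lam).prod := by
  have hpos := (hlam a).1
  have hp : ((v ++ [a]).map lam).prod = (v.map lam).prod * lam a := by simp
  have key : ∀ i : ℕ → Fin N, (∀ ℓ (h : ℓ < (v ++ [a]).length), i ℓ = (v ++ [a]).get ⟨ℓ, h⟩) →
      (IsDeltaStopping lam δ i (v ++ [a]).length ↔ ((v ++ [a]).map lam).prod ≤ δ ∧
      δ * lam a < ((v ++ [a]).map lam).prod) := by
    intro i hi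
    have h1 := tc_range lam _ i hi
    have h2 := tc_range lam v i (fun ℓ h => by
      rw [hi ℓ (by simp; omega)]
      simp [List.getElem_append_left h])
    have h3 : (v ++ [a]).length - 1 = v.length := by simp
    unfold IsDeltaStopping
    rw [h1, h3, h2]
    nth_rewrite 3 [hp]
    rw [mul_lt_mul_iff_left₀ hpos]
    constructor
    · rintro ⟨_, h⟩; exact h
    · intro h; exact ⟨by simp, h⟩
  constructor
  · intro h
    have hi : ∀ ℓ (h : ℓ < (v ++ [a]).length), (fun ℓ => (v ++ [a]).getD ℓ a) ℓ = (v ++ [a]).get ⟨ℓ, h⟩ := by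
      intro ℓ h
      simp only [List.getD_eq_getElem _ _ h, List.get_eq_getElem]
    exact (key _ hi).1 (h _ hi)
  · intro h i hi
    exact (key i hi).2 h

lemma tc_nil {N : ℕ} (hN : 2 ≤ N) (lam : Fin N → ℝ) (δ : ℝ) : [] ∉ moranCover lam δ := by
  intro h
  have := (h (fun _ => ⟨0, by omega⟩) (by simp)).1
  simp at this

lemma tc_ent {N : ℕ} (w : List (Fin N)) (hw : w ≠ []) :
    (∏ a, (w.count a : ℝ) ^ (w.count a)) * Real.exp (w.length * entF (typeOf w)) =
      (w.length : ℝ) ^ w.length := by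
  have hk : (0 : ℝ) < w.length := by exact_mod_cast List.length_pos_iff.2 hw
  have h1 : (w.length : ℝ) * entF (typeOf w) =
      ∑ a, -((w.count a : ℝ) * Real.log ((w.count a : ℝ) / w.length)) := by
    unfold entF typeOf
    rw [mul_neg, Finset.mul_sum, Finset.sum_neg_distrib]
    congr 1
    refine Finset.sum_congr rfl fun a _ => ?_
    field_simp
  rw [h1, Real.exp_sum, ← Finset.prod_mul_distrib]
  have h2 : (w.length : ℝ) ^ w.length = ∏ a, (w.length : ℝ) ^ (w.count a) := by
    rw [Finset.prod_pow_eq_pow_sum, tc_len]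
  rw [h2]
  refine Finset.prod_congr rfl fun a _ => ?_
  rcases Nat.eq_zero_or_pos (w.count a) with h | h
  · simp [h]
  · have hc : (0 : ℝ) < w.count a := by exact_mod_cast h
    rw [Real.exp_neg, Real.exp_nat_mul, Real.exp_log (by positivity), div_pow]
    field_simp

lemma tc_chi {N : ℕ} (lam : Fin N → ℝ) (hlam : ∀ i, lam i ∈ Set.Ioo (0:ℝ) 1) (w : List (Fin N))
    (hw : w ≠ []) : (w.map lam).prod = Real.exp (-(w.length * chiF lam (typeOf w))) := by
  have hk : (0 : ℝ) < w.length := by exact_mod_cast List.length_pos_iff.2 hw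
  rw [tc_prod lam hlam]
  congr 1
  unfold chiF typeOf
  rw [mul_neg, neg_neg, Finset.mul_sum]
  refine Finset.sum_congr rfl fun a _ => ?_
  field_simp

lemma tc_type {N : ℕ} (w : List (Fin N)) (hw : w ≠ []) :
    (∀ a, 0 ≤ typeOf w a) ∧ (∀ a, typeOf w a ≤ 1) ∧ ∑ a, typeOf w a = 1 := by
  have hk : (0 : ℝ) < w.length := by exact_mod_cast List.length_pos_iff.2 hw
  have h0 : ∀ a, 0 ≤ typeOf w a := fun a => by unfold typeOf; positivity
  refine ⟨h0, ?_, ?_⟩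
  · intro a
    unfold typeOf
    rw [div_le_one hk]
    exact_mod_cast List.count_le_length
  · unfold typeOf
    rw [← Finset.sum_div, ← Nat.cast_sum, tc_len]
    exact div_self hk.ne'

lemma tc_entb {N : ℕ} (p : Fin N → ℝ) (h0 : ∀ a, 0 ≤ p a) (h1 : ∀ a, p a ≤ 1) :
    0 ≤ entF p ∧ entF p ≤ N := by
  unfold entF
  rw [← Finset.sum_neg_distrib]
  constructor
  · refine Finset.sum_nonneg fun a _ => ?_
    have := Real.negMulLog_nonneg (h0 a) (h1 a)
    simpa [Real.negMulLog] using this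
  · have : ∑ a : Fin N, (1:ℝ) = N := by simp
    rw [← this]
    refine Finset.sum_le_sum fun a _ => ?_
    rcases (h0 a).eq_or_lt with h | h
    · simp [← h]
    · have h2 := Real.one_sub_inv_le_log_of_pos h
      have h3 := mul_le_mul_of_nonneg_left h2 h.le
      rw [mul_sub, mul_inv_cancel₀ h.ne'] at h3
      linarith

lemma tc_chib {N : ℕ} (lam p : Fin N → ℝ) (h0 : ∀ a, 0 ≤ p a) (h1 : ∑ a, p a = 1) (m : ℝ)
    (hm : ∀ i, m ≤ -Real.log (lam i)) : m ≤ chiF lam p := by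
  unfold chiF
  rw [← Finset.sum_neg_distrib]
  calc m = ∑ a, p a * m := by rw [← Finset.sum_mul, h1, one_mul]
    _ ≤ _ := Finset.sum_le_sum fun a _ => by
      have := mul_le_mul_of_nonneg_left (hm a) (h0 a)
      linarith

lemma tc_upperR {N : ℕ} (w : List (Fin N)) (hw : w ≠ []) :
    ((tcW (fun a => w.count a)).ncard : ℝ) ≤ Real.exp (w.length * entF (typeOf w)) := by
  have h1 := tc_upper (fun a => w.count a)
  rw [tc_len] at h1
  have h1' : ((tcW (fun a => w.count a)).ncard : ℝ) * ∏ a, (w.count a : ℝ) ^ (w.count a) ≤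
    (w.length : ℝ) ^ w.length := by exact_mod_cast h1
  rw [← tc_ent w hw, mul_comm] at h1'
  refine le_of_mul_le_mul_left h1' ?_
  refine Finset.prod_pos fun a _ => ?_
  rcases Nat.eq_zero_or_pos (w.count a) with h | h
  · simp [h]
  · positivity

lemma tc_lowerR {N : ℕ} (hN : 1 ≤ N) (w : List (Fin N)) (hw : w ≠ []) :
    Real.exp (w.length * entF (typeOf w)) ≤
      ((w.length : ℝ) + 1) ^ (N - 1) * ((tcW (fun a => w.count a)).ncard : ℝ) := by
  have h1 := tc_lower hN (fun a => w.count a) _ (tc_len w)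
  have h1' : (w.length : ℝ) ^ w.length ≤ ((w.length : ℝ) + 1) ^ (N - 1) *
    (((tcW (fun a => w.count a)).ncard : ℝ) * ∏ a, (w.count a : ℝ) ^ (w.count a)) := by exact_mod_cast h1
  rw [← tc_ent w hw, ← mul_assoc, mul_comm] at h1'
  refine le_of_mul_le_mul_right h1' ?_
  refine Finset.prod_pos fun a _ => ?_
  rcases Nat.eq_zero_or_pos (w.count a) with h | h
  · simp [h]
  · positivity

/-- bounds on the length of a word of the cover -/
lemma tc_lenb {N : ℕ} (hN : 2 ≤ N) (lam : Fin N → ℝ) (hlam : ∀ i, lam i ∈ Set.Ioo (0:ℝ) 1)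
    (δ : ℝ) (hδ : 0 < δ) (M : ℝ) (hM : ∀ i, -Real.log (lam i) ≤ M) (w : List (Fin N))
    (hw : w ∈ moranCover lam δ) : w ≠ [] ∧
      -Real.log δ ≤ w.length * chiF lam (typeOf w) ∧
      w.length * chiF lam (typeOf w) < -Real.log δ + M := by
  have hne : w ≠ [] := by rintro rfl; exact tc_nil hN lam δ hw
  refine ⟨hne, ?_⟩
  have hc := tc_chi lam hlam w hne
  obtain ⟨v, a, rfl⟩ : ∃ v a, w = v ++ [a] := ⟨_, _, (List.dropLast_append_getLast hne).symm⟩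
  rw [tc_mem lam hlam, hc] at hw
  have hpos := (hlam a).1
  constructor
  · have := Real.log_le_log (Real.exp_pos _) hw.1
    rw [Real.log_exp] at this
    linarith
  · have := Real.log_lt_log (by positivity) hw.2
    rw [Real.log_exp, Real.log_mul hδ.ne' hpos.ne'] at this
    linarith [hM a]

lemma tc_V {N : ℕ} (p : Fin N → ℝ) (k : ℕ) (hk : 0 < k) :
    {w : List (Fin N) | w.length = k ∧ typeOf w = p}.Finite ∧
    ({w : List (Fin N) | w.length = k ∧ typeOf w = p}.ncard : ℝ) ≤ Real.exp (k * entF p) := by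
  have hfin : {w : List (Fin N) | w.length = k ∧ typeOf w = p}.Finite :=
    (List.finite_length_eq (Fin N) k).subset fun w hw => hw.1
  refine ⟨hfin, ?_⟩
  rcases Set.eq_empty_or_nonempty {w : List (Fin N) | w.length = k ∧ typeOf w = p} with h | ⟨w, hw⟩
  · rw [h]; simp; positivity
  · have hne : w ≠ [] := by
      rintro rfl
      have := hw.1
      simp at this
      omega
    have hk' : (k : ℝ) ≠ 0 := by positivity
    obtain ⟨h1, h2⟩ := hw
    have h3 := tc_upperR w hne
    rw [h1, h2] at h3
    refine le_trans ?_ h3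
    exact_mod_cast Set.ncard_le_ncard (by
      intro u hu
      obtain ⟨h4, h5⟩ := hu
      intro a
      have := congrFun (h5.trans h2.symm) a
      unfold typeOf at this
      rw [h4, h1, div_left_inj' hk'] at this
      exact_mod_cast this) (tcW_finite _)

lemma tc_final_upper {N : ℕ} (hN : 2 ≤ N) (lam : Fin N → ℝ) (hlam : ∀ i, lam i ∈ Set.Ioo (0:ℝ) 1)
    (m M : ℝ) (hm : 0 < m) (hmM : m ≤ M) (hm' : ∀ i, m ≤ -Real.log (lam i))
    (hM : ∀ i, -Real.log (lam i) ≤ M) (δ : ℝ) (hδ : δ ∈ Set.Ioo (0:ℝ) 1) (p : Fin N → ℝ)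
    (hp : ∃ w ∈ moranCover lam δ, typeOf w = p) :
    ({w | w ∈ moranCover lam δ ∧ typeOf w = p}.Finite) ∧
    ({w | w ∈ moranCover lam δ ∧ typeOf w = p}.ncard : ℝ) ≤
      (1 + M / m) * Real.exp (M * N / m) * δ ^ (-(entF p / chiF lam p)) := by
  classical
  obtain ⟨w, hw, rfl⟩ := hp
  have hne := (tc_lenb hN lam hlam δ hδ.1 M hM w hw).1
  obtain ⟨t0, t1, t2⟩ := tc_type w hne
  have hχ := tc_chib lam _ t0 t2 m hm'
  obtain ⟨e0, e1⟩ := tc_entb _ t0 t1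
  have hL : 0 < -Real.log δ := by linarith [Real.log_neg hδ.1 hδ.2]
  set p := typeOf w with hp
  set χ := chiF lam p with hχd
  set H := entF p
  set L := -Real.log δ with hLd
  have hχ0 : 0 < χ := by linarith
  have hM0 : 0 < M := by linarith
  let K := Finset.Ico ⌈L / χ⌉₊ ⌈(L + M) / χ⌉₊
  have hK : (K.card : ℝ) ≤ 1 + M / m := by
    have h1 : ⌈L / χ⌉₊ ≤ ⌈(L + M) / χ⌉₊ := Nat.ceil_mono (by gcongr; linarith)
    rw [Nat.card_Ico, Nat.cast_sub h1]
    have h2 := Nat.le_ceil (L / χ)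
    have h3 := Nat.ceil_lt_add_one (show 0 ≤ (L + M) / χ by positivity)
    have h4 : M / χ ≤ M / m := by gcongr
    rw [add_div] at h3 ⊢
    linarith
  have hsub : {u | u ∈ moranCover lam δ ∧ typeOf u = p} ⊆
      ⋃ k ∈ K, {u : List (Fin N) | u.length = k ∧ typeOf u = p} := by
    rintro u ⟨hu, hup⟩
    obtain ⟨_, h1, h2⟩ := tc_lenb hN lam hlam δ hδ.1 M hM u hu
    rw [hup] at h1 h2
    simp only [Set.mem_iUnion, exists_prop]
    refine ⟨u.length, ?_, rfl, hup⟩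
    rw [Finset.mem_Ico]
    constructor
    · rw [Nat.ceil_le, div_le_iff₀ hχ0]; exact h1
    · rw [Nat.lt_ceil, lt_div_iff₀ hχ0]; exact h2
  have hKpos : ∀ k ∈ K, 0 < k := by
    intro k hk
    have := (Finset.mem_Ico.1 hk).1
    have h2 : 0 < ⌈L / χ⌉₊ := Nat.ceil_pos.2 (by positivity)
    omega
  have hUfin : (⋃ k ∈ K, {u : List (Fin N) | u.length = k ∧ typeOf u = p}).Finite :=
    Set.Finite.biUnion K.finite_toSet fun k hk => (tc_V p k (hKpos k hk)).1
  refine ⟨hUfin.subset hsub, ?_⟩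
  have hb : ∀ k ∈ K, (({u : List (Fin N) | u.length = k ∧ typeOf u = p}.ncard : ℕ) : ℝ) ≤
      Real.exp (M * N / m) * δ ^ (-(H / χ)) := by
    intro k hk
    refine (tc_V p k (hKpos k hk)).2.trans ?_
    rw [Real.rpow_def_of_pos hδ.1, ← Real.exp_add]
    apply Real.exp_le_exp.2
    have h2 := (Finset.mem_Ico.1 hk).2
    rw [Nat.lt_ceil] at h2
    have h3 : (k : ℝ) * H ≤ (L + M) / χ * H := by gcongr
    have h4 : (L + M) / χ * H = M * H / χ + Real.log δ * (-(H / χ)) := by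
      rw [hLd]; ring
    have h5 : M * H / χ ≤ M * N / m := by gcongr
    show (k : ℝ) * H ≤ _
    linarith
  have hc : {u | u ∈ moranCover lam δ ∧ typeOf u = p}.ncard ≤
      ∑ k ∈ K, {u : List (Fin N) | u.length = k ∧ typeOf u = p}.ncard :=
    (Set.ncard_le_ncard hsub hUfin).trans (Finset.set_ncard_biUnion_le _ _)
  calc _ ≤ ((∑ k ∈ K, {u : List (Fin N) | u.length = k ∧ typeOf u = p}.ncard : ℕ) : ℝ) := by
        exact_mod_cast hc
    _ = ∑ k ∈ K, ({u : List (Fin N) | u.length = k ∧ typeOf u = p}.ncard : ℝ) := by push_cast; rfl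
    _ ≤ K.card • (Real.exp (M * N / m) * δ ^ (-(H / χ))) := Finset.sum_le_card_nsmul _ _ _ hb
    _ = K.card * (Real.exp (M * N / m) * δ ^ (-(H / χ))) := by rw [nsmul_eq_mul]
    _ ≤ (1 + M / m) * (Real.exp (M * N / m) * δ ^ (-(H / χ))) := by
        have := Real.rpow_pos_of_pos hδ.1 (-(H / χ))
        gcongr
    _ = _ := by ring

lemma tc_final_lower {N : ℕ} (hN : 2 ≤ N) (lam : Fin N → ℝ) (hlam : ∀ i, lam i ∈ Set.Ioo (0:ℝ) 1)
    (m M : ℝ) (hm : 0 < m) (hmM : m ≤ M) (hm' : ∀ i, m ≤ -Real.log (lam i))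
    (hM : ∀ i, -Real.log (lam i) ≤ M) (δ : ℝ) (hδ : δ ∈ Set.Ioo (0:ℝ) 1) (p : Fin N → ℝ)
    (hp : ∃ w ∈ moranCover lam δ, typeOf w = p) :
    δ ^ (-(entF p / chiF lam p)) ≤ ((1 + M / m) * (1 + (-Real.log δ) / chiF lam p)) ^ N *
    ({w | w ∈ moranCover lam δ ∧ typeOf w = p}.ncard : ℝ) := by
  classical
  have hfin := (tc_final_upper hN lam hlam m M hm hmM hm' hM δ hδ p hp).1
  obtain ⟨w, hw, rfl⟩ := hp
  obtain ⟨hne, l1, l2⟩ := tc_lenb hN lam hlam δ hδ.1 M hM w hw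
  obtain ⟨t0, t1, t2⟩ := tc_type w hne
  have hχ := tc_chib lam _ t0 t2 m hm'
  obtain ⟨e0, e1⟩ := tc_entb _ t0 t1
  have hL : 0 < -Real.log δ := by linarith [Real.log_neg hδ.1 hδ.2]
  have hlow := tc_lowerR (by omega) w hne
  have hcnt : ((tcW (fun a => w.count a)).ncard : ℝ) ≤
      w.length * ({u | u ∈ moranCover lam δ ∧ typeOf u = typeOf w}.ncard : ℝ) := by
    obtain ⟨v, a, hva⟩ : ∃ v a, w = v ++ [a] := ⟨_, _, (List.dropLast_append_getLast hne).symm⟩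
    have hca : 0 < w.count a := by rw [hva]; simp
    have h1 := tc_last (fun a => w.count a) a hca
    rw [tc_len] at h1
    have h2 : (tcW (Function.update (fun a => w.count a) a (w.count a - 1))).ncard ≤
        {u | u ∈ moranCover lam δ ∧ typeOf u = typeOf w}.ncard := by
      refine Set.ncard_le_ncard_of_injOn (fun u => u ++ [a]) ?_ ?_ hfin
      · intro u hu
        have hcu : ∀ b, (u ++ [a]).count b = w.count b := by
          intro b
          have := hu b
          by_cases hb : b = a
          · subst hb; simp at this; simp [this]; omega
          · simp [hb] at this
            simp [List.count_append, this, Ne.symm hb]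
        have hlen : (u ++ [a]).length = w.length := by
          rw [← tc_len, ← tc_len w]; exact Finset.sum_congr rfl fun b _ => hcu b
        have hpr : ((u ++ [a]).map lam).prod = (w.map lam).prod := by
          rw [tc_prod lam hlam, tc_prod lam hlam]
          simp only [hcu]
        refine ⟨?_, ?_⟩
        · show u ++ [a] ∈ moranCover lam δ
          rw [tc_mem lam hlam, hpr]
          rw [hva, tc_mem lam hlam] at hw
          rw [hva]; exact hw
        · show typeOf (u ++ [a]) = typeOf w
          funext b
          unfold typeOf
          rw [hcu, hlen]
      · intro x _ y _ hxy
        simpa using hxy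
    exact_mod_cast h1.trans (Nat.mul_le_mul_left _ h2)
  set p := typeOf w with hp
  set χ := chiF lam p with hχd
  set H := entF p
  set L := -Real.log δ with hLd
  set T : ℝ := ({u | u ∈ moranCover lam δ ∧ typeOf u = p}.ncard : ℝ)
  have hT : 0 ≤ T := Nat.cast_nonneg _
  have hχ0 : 0 < χ := by linarith
  have hM0 : 0 < M := by linarith
  set k : ℝ := (w.length : ℝ)
  have hk : 0 ≤ k := Nat.cast_nonneg _
  have hkb : k + 1 ≤ (1 + M / m) * (1 + L / χ) := by
    have h1 : k < (L + M) / χ := by rw [lt_div_iff₀ hχ0]; exact l2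
    have h4 : M / χ ≤ M / m := by gcongr
    have h5 : 0 ≤ M / m * (L / χ) := by positivity
    rw [add_div] at h1
    linarith
  have hd : δ ^ (-(H / χ)) ≤ Real.exp (k * H) := by
    rw [Real.rpow_def_of_pos hδ.1]
    apply Real.exp_le_exp.2
    have h1 : L / χ ≤ k := by rw [div_le_iff₀ hχ0]; exact l1
    have h2 : L / χ * H ≤ k * H := by gcongr
    have h3 : L / χ * H = Real.log δ * (-(H / χ)) := by rw [hLd]; ring
    linarith
  calc _ ≤ Real.exp (k * H) := hd
    _ ≤ _ := hlow
    _ ≤ (k + 1) ^ (N - 1) * (k * T) := by gcongr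
    _ ≤ (k + 1) ^ (N - 1) * ((k + 1) * T) := by gcongr; linarith
    _ = (k + 1) ^ N * T := by
      obtain ⟨n, rfl⟩ : ∃ n, N = n + 1 := ⟨N - 1, by omega⟩
      rw [Nat.add_sub_cancel, pow_succ]; ring
    _ ≤ _ := by gcongr

/-- Size of a type class of the Moran cover: for every `δ ∈ (0,1)`
and every type `p ∈ T_δ`,
`c⁻¹·(1+(-log δ)/χ(p))^{-N}·δ^{-H(p)/χ(p)} ≤ #T_δ(p) ≤ c·δ^{-H(p)/χ(p)}`. -/
theorem type_class_size
    (N : ℕ) (hN : 2 ≤ N)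
    (lam : Fin N → ℝ) (hlam : ∀ i, lam i ∈ Set.Ioo (0:ℝ) 1) :
    ∃ c : ℝ, 1 ≤ c ∧
      ∀ δ : ℝ, δ ∈ Set.Ioo (0:ℝ) 1 → ∀ p : Fin N → ℝ,
        (∃ w ∈ moranCover lam δ, typeOf w = p) →
        c⁻¹ * (1 + (-Real.log δ) / chiF lam p) ^ (-(N : ℝ)) *
            δ ^ (-(entF p / chiF lam p)) ≤
          ({w | w ∈ moranCover lam δ ∧ typeOf w = p}.ncard : ℝ) ∧
        ({w | w ∈ moranCover lam δ ∧ typeOf w = p}.ncard : ℝ) ≤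
          c * δ ^ (-(entF p / chiF lam p)) := by
  obtain ⟨i0, _, hi0⟩ := Finset.exists_min_image (univ : Finset (Fin N)) (fun i => -Real.log (lam i))
    ⟨⟨0, by omega⟩, by simp⟩
  obtain ⟨i1, _, hi1⟩ := Finset.exists_max_image (univ : Finset (Fin N)) (fun i => -Real.log (lam i))
    ⟨⟨0, by omega⟩, by simp⟩
  set m := -Real.log (lam i0) with hmd
  set M := -Real.log (lam i1) with hMd
  have hm' : ∀ i, m ≤ -Real.log (lam i) := fun i => hi0 i (Finset.mem_univ i)
  have hM' : ∀ i, -Real.log (lam i) ≤ M := fun i => hi1 i (Finset.mem_univ i)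
  have hm : 0 < m := by have := Real.log_neg (hlam i0).1 (hlam i0).2; linarith
  have hmM : m ≤ M := hm' i1
  have hM0 : 0 < M := by linarith
  have hA : 1 ≤ 1 + M / m := by have : 0 < M / m := by positivity
                                linarith
  have hE : 1 ≤ Real.exp (M * N / m) := Real.one_le_exp (by positivity)
  have hAN : 1 + M / m ≤ (1 + M / m) ^ N := le_self_pow₀ hA (by omega)
  have hAN1 : 1 ≤ (1 + M / m) ^ N := hA.trans hAN
  have hc : (1 + M / m) ^ N ≤ (1 + M / m) ^ N * Real.exp (M * N / m) :=
    le_mul_of_one_le_right (by positivity) hE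
  refine ⟨(1 + M / m) ^ N * Real.exp (M * N / m), hAN1.trans hc, ?_⟩
  intro δ hδ p hp
  have hup := (tc_final_upper hN lam hlam m M hm hmM hm' hM' δ hδ p hp).2
  have hlo := tc_final_lower hN lam hlam m M hm hmM hm' hM' δ hδ p hp
  have hD := Real.rpow_pos_of_pos hδ.1 (-(entF p / chiF lam p))
  constructor
  · obtain ⟨w, hw, rfl⟩ := hp
    obtain ⟨hne, -, -⟩ := tc_lenb hN lam hlam δ hδ.1 M hM' w hw
    obtain ⟨t0, t1, t2⟩ := tc_type w hne
    have hχ := tc_chib lam _ t0 t2 m hm'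
    have hL : 0 < -Real.log δ := by linarith [Real.log_neg hδ.1 hδ.2]
    have hχ0 : 0 < chiF lam (typeOf w) := by linarith
    have hB : 0 < 1 + (-Real.log δ) / chiF lam (typeOf w) := by positivity
    rw [Real.rpow_neg hB.le, Real.rpow_natCast, ← mul_inv, inv_mul_le_iff₀ (by positivity)]
    refine hlo.trans ?_
    rw [mul_pow]
    gcongr
  · refine hup.trans ?_
    gcongr
end
end
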